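/- For all integers p ≥ 1, k ≥ 1 and every tuple (j_0, j_1, ..., j_p) of nonnegative integers with j_0 + j_1 + ... + j_p = pk, the number N_0(k,(j_0,...,j_p)) of noncrossing pair partitions of {1,...,2pk} adapted to W_0^k whose right-leg statistics are (j_0,...,j_p) satisfies k · N_0(k,(j_0,...,j_p)) = C(k, j_0 + 1) · C(k, j_1) ··· C(k, j_p), i.e. N_0(k,(j_0,...,j_p)) is the generalized Fuss-Narayana number (1/k)·C(k, j_0+1)·∏_{i=1}^{p} C(k, j_i). -/

import Mathlib

/-- The letter at position `r` (1-based, `1 ≤ r ≤ 2p`) of the word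
`W₀ = 1 2 … p p* … 2* 1*`; here `(l, false)` encodes the letter `l` and
`(l, true)` encodes the starred letter `l*`. -/
def letter0 (p r : ℕ) : ℕ × Bool :=
  if r ≤ p then (r, false) else (2 * p + 1 - r, true)

/-- The label of position `m` (1-based) under the periodic word `Wᵢᵏ`, where `Wᵢ`
is the cyclic shift of `W₀` to the right by `i` positions. -/
def labelW (p i m : ℕ) : ℕ × Bool :=
  letter0 p ((m - 1 + (2 * p - i)) % (2 * p) + 1)

/-- `π` is a noncrossing pair partition of `{1, …, m}`, encoded as the finite set of
its blocks, each block written as an ordered pair `(a, b)` with `a < b`: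
all entries lie in `{1, …, m}`, every point of `{1, …, m}` is covered, distinct
blocks are disjoint, and no two blocks cross. -/
def IsNCPP (m : ℕ) (π : Finset (ℕ × ℕ)) : Prop :=
  (∀ b ∈ π, 1 ≤ b.1 ∧ b.2 ≤ m ∧ b.1 < b.2) ∧
  (∀ x, 1 ≤ x → x ≤ m → ∃ b ∈ π, x = b.1 ∨ x = b.2) ∧
  (∀ b ∈ π, ∀ c ∈ π, (b.1 = c.1 ∨ b.1 = c.2 ∨ b.2 = c.1 ∨ b.2 = c.2) → b = c) ∧
  (∀ b ∈ π, ∀ c ∈ π, ¬(b.1 < c.1 ∧ c.1 < b.2 ∧ b.2 < c.2))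

/-- `π ∈ NC²₂ₚₖ(Wᵢᵏ)`: a noncrossing pair partition of `{1, …, 2pk}` each of whose
blocks consists of a position labelled `l` and a position labelled `l*` for some
`l ∈ {1, …, p}` (labels taken from the word `Wᵢᵏ`). -/
def AdaptedNCPP (p i k : ℕ) (π : Finset (ℕ × ℕ)) : Prop :=
  IsNCPP (2 * p * k) π ∧
  ∀ b ∈ π, ∃ l, 1 ≤ l ∧ l ≤ p ∧
    ((labelW p i b.1 = (l, false) ∧ labelW p i b.2 = (l, true)) ∨
     (labelW p i b.1 = (l, true) ∧ labelW p i b.2 = (l, false)))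

/-- The right-leg statistic `jₗ(π) = |R_{l+1}(π)| + |R_{l}*(π)|`: the number of blocks
whose right leg (larger element) is labelled `l+1`, plus the number of blocks whose
right leg is labelled `l*` (the conventions `R₀* = R_{p+1} = ∅` hold automatically,
since those labels never occur). -/
def jstat (p i : ℕ) (π : Finset (ℕ × ℕ)) (l : ℕ) : ℕ :=
  (π.filter fun b => labelW p i b.2 = (l + 1, false)).card +
  (π.filter fun b => labelW p i b.2 = (l, true)).card

open Classical in
/-- The finset `NC²₂ₚₖ(Wᵢᵏ)` of noncrossing pair partitions of `{1, …, 2pk}`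
adapted to `Wᵢᵏ`. -/
noncomputable def NCset (p i k : ℕ) : Finset (Finset (ℕ × ℕ)) :=
  (Finset.Icc 1 (2 * p * k) ×ˢ Finset.Icc 1 (2 * p * k)).powerset.filter
    (AdaptedNCPP p i k)

open Classical in
/-- `Nᵢ(k, (j₀, …, j_p))`: the number of `π ∈ NC²₂ₚₖ(Wᵢᵏ)` with `jₗ(π) = jₗ`
for all `0 ≤ l ≤ p`. -/
noncomputable def Ncount (p i k : ℕ) (j : Fin (p + 1) → ℕ) : ℕ :=
  ((NCset p i k).filter fun π => ∀ l : Fin (p + 1), jstat p i π (l : ℕ) = j l).card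

/-- The generating function `𝒩ᵢ(x, d) = Σ_k (Σ_j Nᵢ(k, j) d^j) x^k ∈ ℝ[[x]]`;
for each `k` only finitely many of the counts `Nᵢ(k, j)` are nonzero, so the inner
`tsum` is a finite sum. -/
noncomputable def genFun (p i : ℕ) (d : Fin (p + 1) → ℝ) : PowerSeries ℝ :=
  PowerSeries.mk fun k =>
    ∑' j : Fin (p + 1) → ℕ, (Ncount p i k j : ℝ) * ∏ l, d l ^ j l

/-!
Let `d l` mark the right legs counted by `jₗ`, let `𝒩ₗ` be the generating series of the partitions
adapted to the powers of the cyclic shift `Wₗ`, which starts with `l*`, and let `Fₗ` be the one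
for the interiors of the blocks formed by the first `l` and a later `l*`. The interior starts with
`l + 1`, and splitting it at the block of this letter gives `Fₗ = d (l + 1) Fₗ₊₁ 𝒩ₗ`, hence
`d 0 F₀ = ∏ₗ d l 𝒩ₗ`. Rotating the initial `(l + 1)*` of a nonempty word to its end changes the
right leg of one block from `l + 1` to `(l + 1)*`, so `d l (𝒩ₗ - 1)` does not depend on `l`; for
`l = 0` it equals `U = X d 0 F₀`. Therefore `U = X ∏ₗ (d l + U)`, and Lagrange inversion gives
`k [Xᵏ] U = [Xᵏ⁻¹] ∏ₗ (d l + X)ᵏ`, a polynomial whose coefficients are products of binomials.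
-/

open Finset

section NoncrossingSums

/-- `π` is a noncrossing pair partition of the half-open interval `[a, e)`, with blocks encoded as
ordered pairs as in `IsNCPP`. Splitting off a block leaves partitions of subintervals that need not
start at `1`. -/
structure IsNCPPOn (a e : ℕ) (π : Finset (ℕ × ℕ)) : Prop where
  bounds : ∀ b ∈ π, a ≤ b.1 ∧ b.1 < b.2 ∧ b.2 < e
  cover : ∀ x, a ≤ x → x < e → ∃ b ∈ π, x = b.1 ∨ x = b.2
  eq_of_meet : ∀ b ∈ π, ∀ c ∈ π, (b.1 = c.1 ∨ b.1 = c.2 ∨ b.2 = c.1 ∨ b.2 = c.2) → b = c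
  not_cross : ∀ b ∈ π, ∀ c ∈ π, ¬(b.1 < c.1 ∧ c.1 < b.2 ∧ b.2 < c.2)

/-- The restriction of a partition `π` to the blocks contained in `[u, v)`; since blocks are ordered
pairs, only the outer bound on each leg is tested. -/
def blocksWithin (u v : ℕ) (π : Finset (ℕ × ℕ)) : Finset (ℕ × ℕ) :=
  π.filter fun b ↦ u ≤ b.1 ∧ b.2 < v

namespace IsNCPPOn

variable {a c e : ℕ} {π π₁ π₂ : Finset (ℕ × ℕ)}

theorem restrict {u v : ℕ} (h : IsNCPPOn a e π) (hu : a ≤ u) (hv : v ≤ e)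
    (hclosed : ∀ b ∈ π, (u ≤ b.1 ∧ b.1 < v) ↔ (u ≤ b.2 ∧ b.2 < v)) :
    IsNCPPOn u v (blocksWithin u v π) := by
  have hsub {b : ℕ × ℕ} (hb : b ∈ blocksWithin u v π) : b ∈ π := (mem_filter.1 hb).1
  refine ⟨fun b hb ↦ ?_, fun x hux hxv ↦ ?_, fun b hb c hc ↦ h.eq_of_meet b (hsub hb) c (hsub hc),
    fun b hb c hc ↦ h.not_cross b (hsub hb) c (hsub hc)⟩
  · grind [h.bounds b (hsub hb), blocksWithin]
  · obtain ⟨b, hb, hx⟩ := h.cover x (hu.trans hux) (hxv.trans_le hv)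
    exact ⟨b, by grind [blocksWithin], hx⟩

theorem trichotomy (h : IsNCPPOn a e π) (hac : (a, c) ∈ π) {b : ℕ × ℕ} (hb : b ∈ π) :
    b = (a, c) ∨ (a + 1 ≤ b.1 ∧ b.2 < c) ∨ c + 1 ≤ b.1 := by
  by_cases heq : b = (a, c)
  · exact Or.inl heq
  have hmeet := mt (h.eq_of_meet b hb (a, c) hac) heq
  have hcross := h.not_cross (a, c) hac b hb
  have hbounds := h.bounds b hb
  grind

theorem inside (h : IsNCPPOn a e π) (hac : (a, c) ∈ π) :
    IsNCPPOn (a + 1) c (blocksWithin (a + 1) c π) := by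
  have hc := h.bounds _ hac
  refine h.restrict (by grind) (by grind) fun b hb ↦ ?_
  have hb' := h.bounds b hb
  grind [h.trichotomy hac hb]

theorem outside (h : IsNCPPOn a e π) (hac : (a, c) ∈ π) :
    IsNCPPOn (c + 1) e (blocksWithin (c + 1) e π) := by
  have hc := h.bounds _ hac
  refine h.restrict (by grind) (by grind) fun b hb ↦ ?_
  have hb' := h.bounds b hb
  grind [h.trichotomy hac hb]

theorem insert_union (h₁ : IsNCPPOn (a + 1) c π₁) (h₂ : IsNCPPOn (c + 1) e π₂)
    (hac : a < c) (hce : c < e) : IsNCPPOn a e (insert (a, c) (π₁ ∪ π₂)) := by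
  obtain ⟨b₁, c₁, m₁, n₁⟩ := h₁
  obtain ⟨b₂, c₂, m₂, n₂⟩ := h₂
  constructor
  · grind
  · intro x hx hx'
    obtain rfl | rfl | hinside | houtside : x = a ∨ x = c ∨ (a + 1 ≤ x ∧ x < c) ∨ c + 1 ≤ x := by
      omega
    · exact ⟨(x, c), mem_insert_self _ _, .inl rfl⟩
    · exact ⟨(a, x), mem_insert_self _ _, .inr rfl⟩
    · obtain ⟨b, hb, hxb⟩ := c₁ x hinside.1 hinside.2
      exact ⟨b, by simp [hb], hxb⟩
    · obtain ⟨b, hb, hxb⟩ := c₂ x houtside hx'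
      exact ⟨b, by simp [hb], hxb⟩
  · grind
  · grind

end IsNCPPOn

open Classical in
/-- The finset of all noncrossing pair partitions of `[a, e)`. -/
noncomputable def ncPairPartitions (a e : ℕ) : Finset (Finset (ℕ × ℕ)) :=
  (Ico a e ×ˢ Ico a e).powerset.filter (IsNCPPOn a e)

theorem mem_ncPairPartitions {a e : ℕ} {π : Finset (ℕ × ℕ)} :
    π ∈ ncPairPartitions a e ↔ IsNCPPOn a e π := by
  classical
  rw [ncPairPartitions, mem_filter, mem_powerset, and_iff_right_iff_imp]
  intro h b hb
  grind [h.bounds b hb]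

theorem ncPairPartitions_of_le {a e : ℕ} (h : e ≤ a) : ncPairPartitions a e = {∅} := by
  ext π
  rw [mem_ncPairPartitions, mem_singleton]
  constructor
  · intro hπ
    rw [eq_empty_iff_forall_notMem]
    intro b hb
    grind [hπ.bounds b hb]
  · rintro rfl
    constructor <;> grind

variable {R : Type*} [CommSemiring R]

/-- The partition function of a block weight `w`: the sum over the noncrossing pair partitions of
`[a, e)` of the product of the weights `w x y` of their blocks `(x, y)`. A set of admissible blocks
is encoded by letting `w` vanish off it. -/
noncomputable def ncSum (w : ℕ → ℕ → R) (a e : ℕ) : R :=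
  ∑ π ∈ ncPairPartitions a e, ∏ b ∈ π, w b.1 b.2

theorem ncSum_of_le (w : ℕ → ℕ → R) {a e : ℕ} (h : e ≤ a) : ncSum w a e = 1 := by
  simp [ncSum, ncPairPartitions_of_le h]

theorem sum_ncPairPartitions_filter_mem (w : ℕ → ℕ → R) {a c e : ℕ} (hac : a < c) (hce : c < e) :
    ∑ π ∈ ncPairPartitions a e with (a, c) ∈ π, ∏ b ∈ π, w b.1 b.2 =
      w a c * ncSum w (a + 1) c * ncSum w (c + 1) e := by
  symm
  rw [mul_assoc, ncSum, ncSum, sum_mul_sum, ← sum_product', mul_sum]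
  refine sum_nbij' (fun q ↦ insert (a, c) (q.1 ∪ q.2))
    (fun π ↦ (blocksWithin (a + 1) c π, blocksWithin (c + 1) e π)) ?_ ?_ ?_ ?_ ?_
  · simp only [mem_product, mem_filter, mem_ncPairPartitions]
    exact fun q hq ↦ ⟨hq.1.insert_union hq.2 hac hce, mem_insert_self _ _⟩
  · simp only [mem_product, mem_filter, mem_ncPairPartitions]
    exact fun π hπ ↦ ⟨hπ.1.inside hπ.2, hπ.1.outside hπ.2⟩
  · simp only [mem_product, mem_ncPairPartitions]
    rintro ⟨π₁, π₂⟩ ⟨h₁, h₂⟩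
    have hb₁ := h₁.bounds
    have hb₂ := h₂.bounds
    simp only [blocksWithin, Prod.mk.injEq]
    constructor <;> ext b <;> grind
  · simp only [mem_filter, mem_ncPairPartitions]
    rintro π ⟨hπ, hac⟩
    have hb := hπ.bounds
    have := fun b hb ↦ hπ.trichotomy hac (b := b) hb
    simp only [blocksWithin]
    ext b
    grind
  · simp only [mem_product, mem_ncPairPartitions]
    rintro ⟨π₁, π₂⟩ ⟨h₁, h₂⟩
    have hb₁ := h₁.bounds
    have hb₂ := h₂.bounds
    rw [prod_insert, prod_union]
    · rw [disjoint_left]; grind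
    · grind

theorem ncSum_eq_sum_first (w : ℕ → ℕ → R) {a e : ℕ} (hae : a < e) :
    ncSum w a e = ∑ c ∈ Ico (a + 1) e, w a c * ncSum w (a + 1) c * ncSum w (c + 1) e := by
  have hcover : ncPairPartitions a e =
      (Ico (a + 1) e).biUnion fun c ↦ {π ∈ ncPairPartitions a e | (a, c) ∈ π} := by
    ext π
    simp only [mem_biUnion, mem_filter, mem_Ico, mem_ncPairPartitions]
    refine ⟨fun hπ ↦ ?_, fun ⟨_, _, hπ, _⟩ ↦ hπ⟩
    obtain ⟨⟨x, c⟩, hb, hx⟩ := hπ.cover a le_rfl hae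
    have := hπ.bounds _ hb
    obtain rfl : a = x := by grind
    exact ⟨c, by grind, hπ, hb⟩
  rw [ncSum, hcover, sum_biUnion]
  · refine sum_congr rfl fun c hc ↦ ?_
    rw [mem_Ico] at hc
    exact sum_ncPairPartitions_filter_mem w hc.1 hc.2
  · intro c _ c' _ hne
    simp only [Function.onFun, disjoint_left, mem_filter, mem_ncPairPartitions]
    rintro π ⟨hπ, hc⟩ ⟨-, hc'⟩
    exact hne (congrArg Prod.snd (hπ.eq_of_meet _ hc _ hc' (.inl rfl)))

theorem ncSum_eq_sum_last (w : ℕ → ℕ → R) {a e : ℕ} (hae : a ≤ e) :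
    ncSum w a (e + 1) = ∑ c ∈ Ico a e, w c e * ncSum w a c * ncSum w (c + 1) e := by
  induction hn : e - a using Nat.strong_induction_on generalizing a with
  | _ n ih =>
  rcases hae.eq_or_lt with rfl | hlt
  · simp [ncSum_eq_sum_first w (Nat.lt_succ_self a)]
  have outer_inner : ∀ c ∈ Ico (a + 1) e,
      w a c * ncSum w (a + 1) c * ncSum w (c + 1) (e + 1) = ∑ d ∈ Ico (c + 1) e,
        w a c * w d e * ncSum w (a + 1) c * ncSum w (c + 1) d * ncSum w (d + 1) e := by
    intro c hc
    rw [mem_Ico] at hc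
    rw [ih (e - (c + 1)) (by omega) hc.2 rfl, mul_sum]
    exact sum_congr rfl fun d _ ↦ by ring
  have inner_outer : ∀ d ∈ Ico (a + 1) e,
      w d e * ncSum w a d * ncSum w (d + 1) e = ∑ c ∈ Ico (a + 1) d,
        w a c * w d e * ncSum w (a + 1) c * ncSum w (c + 1) d * ncSum w (d + 1) e := by
    intro d hd
    rw [mem_Ico] at hd
    rw [ncSum_eq_sum_first w hd.1, mul_sum, sum_mul]
    exact sum_congr rfl fun c _ ↦ by ring
  rw [ncSum_eq_sum_first w (by omega), sum_Ico_succ_top (by omega), sum_eq_sum_Ico_succ_bot hlt,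
    sum_congr rfl outer_inner, sum_congr rfl inner_outer, ncSum_of_le w le_rfl,
    ncSum_of_le w le_rfl, mul_one, mul_one, add_comm]
  congr 1
  apply sum_comm'
  grind

/-- Moving the first point `a` to the end of the interval turns its block `(a, c)` into `(c, e)`
and changes no other block. -/
theorem mul_ncSum_rotate {w : ℕ → ℕ → R} {a e : ℕ} (hae : a < e) {x y : R}
    (hw : ∀ c, a < c → c < e → x * w a c = y * w c e) :
    x * ncSum w a e = y * ncSum w (a + 1) (e + 1) := by
  rw [ncSum_eq_sum_first w hae, ncSum_eq_sum_last w (show a + 1 ≤ e from hae), mul_sum, mul_sum]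
  refine sum_congr rfl fun c hc ↦ ?_
  rw [mem_Ico] at hc
  simp only [← mul_assoc, hw c hc.1 hc.2]

theorem ncSum_add_right {w : ℕ → ℕ → R} (t : ℕ) {a e : ℕ}
    (hw : ∀ x y, a ≤ x → x < y → w (x + t) (y + t) = w x y) :
    ncSum w (a + t) (e + t) = ncSum w a e := by
  induction hn : e - a using Nat.strong_induction_on generalizing a e with
  | _ n ih =>
  rcases le_or_gt e a with h | h
  · rw [ncSum_of_le w h, ncSum_of_le w (by omega)]
  rw [ncSum_eq_sum_first w h, ncSum_eq_sum_first w (by omega), Nat.add_right_comm,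
    ← sum_Ico_add' _ _ _ t]
  refine sum_congr rfl fun c hc ↦ ?_
  rw [mem_Ico] at hc
  rw [hw a c le_rfl (by omega),
    ih (c - (a + 1)) (by omega) (fun x y hx ↦ hw x y (by omega)) rfl, Nat.add_right_comm c t 1,
    ih (e - (c + 1)) (by omega) (fun x y hx ↦ hw x y (by omega)) rfl]

end NoncrossingSums

section LagrangeInversion

open PowerSeries

section CommSemiring

variable {R : Type*} [CommSemiring R]

theorem coeff_X_mul_derivative (f : R⟦X⟧) (n : ℕ) :
    coeff n (X * d⁄dX R f) = n * coeff n f := by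
  cases n with
  | zero => simp
  | succ n => rw [coeff_succ_X_mul, coeff_derivative, mul_comm, Nat.cast_succ]

theorem coeff_pow_eq_zero_of_lt {U : R⟦X⟧} (hU : constantCoeff U = 0) {n m : ℕ} (h : n < m) :
    coeff n (U ^ m) = 0 :=
  coeff_of_lt_order n <| lt_of_lt_of_le (by exact_mod_cast h) <|
    le_order_pow_of_constantCoeff_eq_zero m hU

/-- The coefficient form of `(m + n) (φ ^ m)' φ ^ n = m (φ ^ (m + n))'`, multiplied by `X`. -/
theorem sum_antidiagonal_coeff_pow_mul_coeff_pow (φ : R⟦X⟧) (m n : ℕ) :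
    ((m + n : ℕ) : R) * ∑ x ∈ antidiagonal n, coeff x.1 (φ ^ m) * (x.1 * coeff x.2 (φ ^ n)) =
      n * (m * coeff n (φ ^ (m + n))) := by
  have hderiv : ((m + n : ℕ) : R⟦X⟧) * (X * d⁄dX R (φ ^ m) * φ ^ n) =
      (m : R⟦X⟧) * (X * d⁄dX R (φ ^ (m + n))) := by
    cases m with
    | zero => simp
    | succ m =>
      rw [derivative_pow, derivative_pow, show m + 1 + n - 1 = m + n by omega, Nat.add_sub_cancel,
        pow_add]
      ring
  have h := congrArg (coeff n) hderiv
  rw [← map_natCast (C (R := R)), ← map_natCast (C (R := R)), coeff_C_mul, coeff_C_mul,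
    coeff_X_mul_derivative, coeff_mul] at h
  simp only [coeff_X_mul_derivative] at h
  rw [mul_left_comm, ← h]
  exact congrArg _ (sum_congr rfl fun x _ ↦ by ring)

end CommSemiring

section CommRing

variable {R : Type*} [CommRing R]

theorem coeff_subst_eq_sum_antidiagonal {U : R⟦X⟧} (hU : constantCoeff U = 0) (f : R⟦X⟧) (n : ℕ) :
    coeff n (f.subst U) = ∑ x ∈ antidiagonal n, coeff x.1 f * coeff n (U ^ x.1) := by
  rw [coeff_subst' (.of_constantCoeff_zero' hU),
    finsum_eq_sum_of_support_subset (s := range (n + 1)),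
    Nat.sum_antidiagonal_eq_sum_range_succ_mk]
  · rfl
  · intro i hi
    by_contra hin
    simp only [coe_range, Set.mem_Iio, not_lt] at hin
    exact hi (by simp [coeff_pow_eq_zero_of_lt hU hin])

theorem lagrange_inversion [IsAddTorsionFree R] {U φ : R⟦X⟧} (hU : constantCoeff U = 0)
    (h : U = X * φ.subst U) (m n : ℕ) :
    ((m + n : ℕ) : R) * coeff (m + n) (U ^ m) = m * coeff n (φ ^ (m + n)) := by
  induction n using Nat.strong_induction_on generalizing m with
  | _ n ih =>
  have hexpand : coeff (m + n) (U ^ m) =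
      ∑ x ∈ antidiagonal n, coeff x.1 (φ ^ m) * coeff n (U ^ x.1) := by
    conv_lhs => rw [h, mul_pow, ← subst_pow (.of_constantCoeff_zero' hU), add_comm, coeff_X_pow_mul]
    exact coeff_subst_eq_sum_antidiagonal hU _ _
  rcases n.eq_zero_or_pos with rfl | hn
  · rw [hexpand]
    simp
  refine IsAddTorsionFree.nsmul_right_injective hn.ne' ?_
  simp only [nsmul_eq_mul]
  rw [← sum_antidiagonal_coeff_pow_mul_coeff_pow, mul_left_comm, hexpand, mul_sum]
  refine congrArg _ (sum_congr rfl fun ⟨i, r⟩ hir ↦ ?_)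
  obtain rfl : i + r = n := mem_antidiagonal.1 hir
  rcases i.eq_zero_or_pos with rfl | hi
  · simp [coeff_one, show r ≠ 0 by omega]
  · rw [mul_left_comm, ih r (by omega) i]
end CommRing

end LagrangeInversion

section BinomialProducts

open PowerSeries

theorem coeff_prod_C_add_X_pow {σ R : Type*} [Fintype σ] [DecidableEq σ] [CommSemiring R]
    (x : σ → R) (k n : ℕ) :
    coeff n ((∏ l, (C (x l) + X)) ^ k) =
      ∑ f ∈ Fintype.piFinset (fun _ : σ ↦ range (k + 1)) with n = ∑ l, (k - f l),
        (∏ l, (k.choose (f l) : R)) * ∏ l, x l ^ f l := by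
  have hexpand : (∏ l, (C (x l) + X)) ^ k = ∑ f ∈ Fintype.piFinset fun _ : σ ↦ range (k + 1),
      C ((∏ l, (k.choose (f l) : R)) * ∏ l, x l ^ f l) * X ^ ∑ l, (k - f l) := by
    simp only [← prod_pow, add_pow, prod_univ_sum, ← prod_pow_eq_pow_sum, map_mul, map_prod,
      map_pow, map_natCast, ← prod_mul_distrib]
    exact sum_congr rfl fun f _ ↦ prod_congr rfl fun l _ ↦ by ring
  simp only [hexpand, map_sum, coeff_C_mul_X_pow, sum_filter]

theorem prod_X_pow_eq_monomial {σ R : Type*} [Fintype σ] [CommSemiring R] (f : σ → ℕ) :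
    ∏ l, (MvPolynomial.X l : MvPolynomial σ R) ^ f l =
      MvPolynomial.monomial (Finsupp.equivFunOnFinite.symm f) 1 := by
  simp [MvPolynomial.monomial_eq, Finsupp.prod_fintype]

theorem coeff_coeff_prod_C_X_add_X_pow {σ R : Type*} [Fintype σ] [CommSemiring R] {k n : ℕ}
    {j : σ → ℕ} (hj : ∑ l, j l + n = Fintype.card σ * k) :
    (coeff n ((∏ l, (C (MvPolynomial.X l : MvPolynomial σ R) + X)) ^ k)).coeff
      (Finsupp.equivFunOnFinite.symm j) = ∏ l, (k.choose (j l) : R) := by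
  classical
  have hcoeff (f : σ → ℕ) : ((∏ l, (k.choose (f l) : MvPolynomial σ R)) *
      ∏ l, MvPolynomial.X l ^ f l).coeff (Finsupp.equivFunOnFinite.symm j) =
        if f = j then ∏ l, (k.choose (j l) : R) else 0 := by
    have hC : ∏ l, (k.choose (f l) : MvPolynomial σ R) =
        MvPolynomial.C (∏ l, (k.choose (f l) : R)) := by simp
    rw [prod_X_pow_eq_monomial, hC, MvPolynomial.coeff_C_mul, MvPolynomial.coeff_monomial]
    simp only [EmbeddingLike.apply_eq_iff_eq, mul_ite, mul_one, mul_zero]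
    split_ifs with h
    · rw [h]
    · rfl
  rw [coeff_prod_C_add_X_pow, MvPolynomial.coeff_sum]
  simp only [hcoeff, sum_ite_eq', mem_filter, Fintype.mem_piFinset, mem_range, Nat.lt_succ_iff]
  refine ite_eq_left_iff.2 fun h ↦ ?_
  by_contra! hne
  have hle (l : σ) : j l ≤ k := by
    by_contra! hl
    exact hne.symm (prod_eq_zero (mem_univ l) (by rw [Nat.choose_eq_zero_of_lt hl, Nat.cast_zero]))
  have hsum : ∑ l, (k - j l) + ∑ l, j l = Fintype.card σ * k := by
    simp [← sum_add_distrib, Nat.sub_add_cancel (hle _)]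
  exact h ⟨hle, by omega⟩

end BinomialProducts

section Words

variable {p i k : ℕ}

/-- The position of the `n`-th occurrence (counted from `0`) of the letter `l*` in the periodic word
`W₀ W₀ W₀ …`. For `l = 0` this is the first position after the `n`-th copy of `W₀`. -/
def starPos (p n l : ℕ) : ℕ := 2 * p * (n + 1) + 1 - l

theorem labelW_zero_add_mul {x : ℕ} (hx : 1 ≤ x) (n : ℕ) :
    labelW p 0 (x + 2 * p * n) = labelW p 0 x := by
  have hdiff : x + 2 * p * n - 1 + (2 * p - 0) = x - 1 + (2 * p - 0) + 2 * p * n := by omega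
  rw [labelW, labelW, hdiff, Nat.add_mul_mod_self_left]

theorem labelW_zero_of_mem_Icc {x : ℕ} (hx : x ∈ Icc 1 (2 * p)) : labelW p 0 x = letter0 p x := by
  rw [mem_Icc] at hx
  rw [labelW, Nat.sub_zero, Nat.add_mod_right, Nat.mod_eq_of_lt (by omega),
    Nat.sub_add_cancel hx.1]

theorem labelW_zero_of_le {l : ℕ} (hl : 1 ≤ l) (hlp : l ≤ p) : labelW p 0 l = (l, false) := by
  rw [labelW_zero_of_mem_Icc (mem_Icc.2 ⟨hl, by omega⟩), letter0, if_pos hlp]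

theorem starPos_eq_add_mul {l : ℕ} (hlp : l ≤ p) (n : ℕ) :
    starPos p n l = starPos p 0 l + 2 * p * n := by
  rw [starPos, starPos, mul_add]
  omega

theorem starPos_strictMono {l : ℕ} (hp : 1 ≤ p) (hlp : l ≤ p) :
    StrictMono fun n ↦ starPos p n l := by
  intro m n hmn
  simp only [starPos_eq_add_mul hlp m, starPos_eq_add_mul hlp n]
  gcongr

theorem starPos_succ_add_one {l : ℕ} (hl : l < p) (n : ℕ) :
    starPos p n (l + 1) + 1 = starPos p n l := by
  rw [starPos, starPos, mul_add]
  omega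

theorem labelW_zero_starPos {l : ℕ} (hl : 1 ≤ l) (hlp : l ≤ p) (n : ℕ) :
    labelW p 0 (starPos p n l) = (l, true) := by
  have hpos : starPos p 0 l ∈ Icc 1 (2 * p) := by rw [mem_Icc, starPos]; omega
  rw [starPos_eq_add_mul hlp, labelW_zero_add_mul (mem_Icc.1 hpos).1, labelW_zero_of_mem_Icc hpos,
    letter0, if_neg (by rw [starPos]; omega), starPos]
  congr 1
  omega

theorem eq_starPos_of_labelW_zero {x l : ℕ} (hp : 1 ≤ p) (hx : 1 ≤ x)
    (h : labelW p 0 x = (l, true)) : ∃ n, x = starPos p n l := by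
  have hlt := Nat.mod_lt (x - 1) (show 0 < 2 * p by omega)
  have hdiv := Nat.div_add_mod (x - 1) (2 * p)
  refine ⟨(x - 1) / (2 * p), ?_⟩
  rw [labelW, Nat.sub_zero, Nat.add_mod_right, letter0] at h
  split_ifs at h
  · cases h
  · cases h
    rw [starPos, mul_add]
    omega

/-- The positions `x` and `y` of the word `Wᵢᵏ` carry the letters `l` and `l*`, in either order, for
some `l ∈ {1, …, p}`: the condition that `AdaptedNCPP` puts on a block. -/
def IsAdaptedPair (p i x y : ℕ) : Prop :=
  ∃ l, 1 ≤ l ∧ l ≤ p ∧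
    ((labelW p i x = (l, false) ∧ labelW p i y = (l, true)) ∨
     (labelW p i x = (l, true) ∧ labelW p i y = (l, false)))

theorem isAdaptedPair_comm {x y : ℕ} : IsAdaptedPair p i x y ↔ IsAdaptedPair p i y x :=
  exists_congr fun _ ↦ by tauto

theorem isAdaptedPair_iff_of_labelW {l x y : ℕ} {s : Bool} (hl : 1 ≤ l) (hlp : l ≤ p)
    (hx : labelW p i x = (l, s)) : IsAdaptedPair p i x y ↔ labelW p i y = (l, !s) := by
  rw [IsAdaptedPair, hx]
  cases s <;> grind

/-- The index of the right-leg statistic `jₗ` to which a block contributes, as a function of the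
letter at its right leg. -/
def rightLegIndex : ℕ × Bool → ℕ
  | (l, false) => l - 1
  | (l, true) => l

theorem IsAdaptedPair.rightLegIndex_eq_iff {x y l : ℕ} (h : IsAdaptedPair p i x y) :
    rightLegIndex (labelW p i y) = l ↔
      labelW p i y = (l + 1, false) ∨ labelW p i y = (l, true) := by
  obtain ⟨m, hm, -, ⟨-, hy⟩ | ⟨-, hy⟩⟩ := h
  · simp [hy, rightLegIndex]
  · rw [hy, rightLegIndex]
    grind

theorem IsAdaptedPair.rightLegIndex_le {x y : ℕ} (h : IsAdaptedPair p i x y) :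
    rightLegIndex (labelW p i y) ≤ p := by
  obtain ⟨m, -, hmp, ⟨-, hy⟩ | ⟨-, hy⟩⟩ := h <;> rw [hy, rightLegIndex] <;> omega

theorem mem_NCset_iff {π : Finset (ℕ × ℕ)} :
    π ∈ NCset p i k ↔ IsNCPPOn 1 (2 * p * k + 1) π ∧ ∀ b ∈ π, IsAdaptedPair p i b.1 b.2 := by
  simp only [NCset, mem_filter, mem_powerset, AdaptedNCPP, IsNCPP, IsAdaptedPair]
  constructor
  · rintro ⟨-, ⟨hbounds, hcover, hmeet, hcross⟩, hadapted⟩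
    exact ⟨⟨by grind, by grind, hmeet, hcross⟩, hadapted⟩
  · rintro ⟨⟨hbounds, hcover, hmeet, hcross⟩, hadapted⟩
    exact ⟨fun b hb ↦ by grind, ⟨by grind, by grind, hmeet, hcross⟩, hadapted⟩

variable {R : Type*} [CommSemiring R]

open Classical in
/-- The weight of the block `(x, y)` of the word `Wᵢᵏ`: adapted blocks counted by `jₗ` have weight
`d l`, all other blocks have weight `0`. -/
noncomputable def blockWeight (p i : ℕ) (d : ℕ → R) (x y : ℕ) : R :=
  if IsAdaptedPair p i x y then d (rightLegIndex (labelW p i y)) else 0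

theorem blockWeight_of_labelW_left {l x : ℕ} {s : Bool} (d : ℕ → R) (hl : 1 ≤ l) (hlp : l ≤ p)
    (hx : labelW p i x = (l, s)) (y : ℕ) : blockWeight p i d x y =
      if labelW p i y = (l, !s) then d (rightLegIndex (l, !s)) else 0 := by
  simp only [blockWeight, isAdaptedPair_iff_of_labelW hl hlp hx]
  split_ifs with h
  · rw [h]
  · rfl

theorem blockWeight_of_labelW_right {l y : ℕ} {s : Bool} (d : ℕ → R) (hl : 1 ≤ l) (hlp : l ≤ p)
    (hy : labelW p i y = (l, s)) (x : ℕ) : blockWeight p i d x y =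
      if labelW p i x = (l, !s) then d (rightLegIndex (l, s)) else 0 := by
  simp only [blockWeight, isAdaptedPair_comm (x := x), isAdaptedPair_iff_of_labelW hl hlp hy, hy]

theorem blockWeight_zero_add_mul (d : ℕ → R) {x y : ℕ} (hx : 1 ≤ x) (hy : 1 ≤ y) (n : ℕ) :
    blockWeight p 0 d (x + 2 * p * n) (y + 2 * p * n) = blockWeight p 0 d x y := by
  have hiff : IsAdaptedPair p 0 (x + 2 * p * n) (y + 2 * p * n) ↔ IsAdaptedPair p 0 x y := by
    rw [IsAdaptedPair, IsAdaptedPair, labelW_zero_add_mul hx, labelW_zero_add_mul hy]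
  classical
  simp only [blockWeight, hiff, labelW_zero_add_mul hy]

theorem ncSum_blockWeight_zero_add_mul (d : ℕ → R) {a : ℕ} (ha : 1 ≤ a) (e n : ℕ) :
    ncSum (blockWeight p 0 d) (a + 2 * p * n) (e + 2 * p * n) = ncSum (blockWeight p 0 d) a e :=
  ncSum_add_right _ fun _ _ hx hxy ↦
    blockWeight_zero_add_mul d (ha.trans hx) (ha.trans (hx.trans hxy.le)) n

theorem prod_rightLegIndex_eq_prod_pow_jstat (d : ℕ → R) {π : Finset (ℕ × ℕ)}
    (hπ : ∀ b ∈ π, IsAdaptedPair p i b.1 b.2) :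
    ∏ b ∈ π, d (rightLegIndex (labelW p i b.2)) = ∏ l ∈ range (p + 1), d l ^ jstat p i π l := by
  rw [← prod_fiberwise_of_maps_to (t := range (p + 1))
    fun b hb ↦ mem_range.2 (Nat.lt_succ_of_le (hπ b hb).rightLegIndex_le)]
  refine prod_congr rfl fun l _ ↦ ?_
  have hcard : #{b ∈ π | rightLegIndex (labelW p i b.2) = l} = jstat p i π l := by
    rw [jstat, ← card_union_of_disjoint (disjoint_filter.2 fun b _ h ↦ by simp [h]), ← filter_or]
    exact congrArg card (filter_congr fun b hb ↦ (hπ b hb).rightLegIndex_eq_iff)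
  rw [← hcard]
  exact prod_eq_pow_card fun b hb ↦ congrArg d (mem_filter.1 hb).2

theorem ncSum_blockWeight (d : ℕ → R) :
    ncSum (blockWeight p i d) 1 (2 * p * k + 1) =
      ∑ π ∈ NCset p i k, ∏ l ∈ range (p + 1), d l ^ jstat p i π l := by
  symm
  rw [ncSum]
  refine sum_subset_zero_on_sdiff (fun π hπ ↦ mem_ncPairPartitions.2 (mem_NCset_iff.1 hπ).1)
    (fun π hπ ↦ ?_) fun π hπ ↦ ?_
  · rw [mem_sdiff, mem_ncPairPartitions, mem_NCset_iff] at hπ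
    obtain ⟨b, hb, hadapted⟩ : ∃ b ∈ π, ¬IsAdaptedPair p i b.1 b.2 := by
      by_contra! h
      exact hπ.2 ⟨hπ.1, h⟩
    exact prod_eq_zero hb (if_neg hadapted)
  · have hadapted := (mem_NCset_iff.1 hπ).2
    rw [← prod_rightLegIndex_eq_prod_pow_jstat d hadapted]
    exact prod_congr rfl fun b hb ↦ (if_pos (hadapted b hb)).symm

theorem coeff_ncSum_blockWeight (j : Fin (p + 1) → ℕ) :
    (ncSum (blockWeight p i fun l ↦ (MvPolynomial.X (Fin.ofNat (p + 1) l) :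
      MvPolynomial (Fin (p + 1)) R)) 1 (2 * p * k + 1)).coeff (Finsupp.equivFunOnFinite.symm j) =
        Ncount p i k j := by
  classical
  simp only [ncSum_blockWeight, prod_range, Fin.ofNat_val_eq_self, prod_X_pow_eq_monomial,
    MvPolynomial.coeff_sum, MvPolynomial.coeff_monomial, EmbeddingLike.apply_eq_iff_eq, sum_boole,
    funext_iff, Ncount]

end Words

section GeneratingSeries

open PowerSeries

variable {p : ℕ}

section CommSemiring

variable {R : Type*} [CommSemiring R] (d : ℕ → R)

/-- The weighted generating series `𝒩ₗ` of the noncrossing pair partitions adapted to the powers of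
`Wₗ`, the cyclic shift of `W₀` that starts with `l*`. The word `Wₗⁿ` is read off inside the periodic
word `W₀ W₀ W₀ …`, between two occurrences of `l*`. -/
noncomputable def cyclicSeries (p : ℕ) (d : ℕ → R) (l : ℕ) : R⟦X⟧ :=
  mk fun n ↦ ncSum (blockWeight p 0 d) (starPos p 0 l) (starPos p n l)

/-- The weighted generating series of the noncrossing pair partitions adapted to the word strictly
between the first letter `l` and the `n`-th `l*` of the periodic word `W₀ W₀ W₀ …`, that is, to the
interior of a block formed by these two letters. For `l = 0` this word is `W₀ⁿ⁺¹`. -/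
noncomputable def nestedSeries (p : ℕ) (d : ℕ → R) (l : ℕ) : R⟦X⟧ :=
  mk fun n ↦ ncSum (blockWeight p 0 d) (l + 1) (starPos p n l)

theorem constantCoeff_cyclicSeries (l : ℕ) : constantCoeff (cyclicSeries p d l) = 1 := by
  rw [← coeff_zero_eq_constantCoeff_apply, cyclicSeries, coeff_mk, ncSum_of_le _ le_rfl]

theorem nestedSeries_self : nestedSeries p d p = cyclicSeries p d p := by
  have hpos : starPos p 0 p = p + 1 := by rw [starPos]; omega
  rw [nestedSeries, cyclicSeries, hpos]

theorem cyclicSeries_zero : cyclicSeries p d 0 = 1 + X * nestedSeries p d 0 := by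
  ext n
  cases n with
  | zero => simp [constantCoeff_cyclicSeries]
  | succ n =>
    have hstart : starPos p 0 0 = 1 + 2 * p * 1 := by rw [starPos]; omega
    have hend : starPos p (n + 1) 0 = starPos p n 0 + 2 * p * 1 := by
      simp only [starPos, mul_add]; omega
    rw [cyclicSeries, coeff_mk, hstart, hend, ncSum_blockWeight_zero_add_mul d le_rfl, map_add,
      coeff_succ_X_mul, nestedSeries, coeff_mk, coeff_one, if_neg n.succ_ne_zero, zero_add]

theorem coeff_nestedSeries_eq_sum {l : ℕ} (hl : l < p) (n : ℕ) :
    coeff n (nestedSeries p d l) = ∑ m ∈ range (n + 1), d (l + 1) *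
      ncSum (blockWeight p 0 d) (l + 2) (starPos p m (l + 1)) *
        ncSum (blockWeight p 0 d) (starPos p m l) (starPos p n l) := by
  have hmono := starPos_strictMono (Nat.zero_lt_of_lt hl) (Nat.succ_le_of_lt hl)
  have hstar (m : ℕ) : l + 2 ≤ starPos p m (l + 1) := by rw [starPos, mul_add]; omega
  have hweight := blockWeight_of_labelW_left d (Nat.le_add_left 1 l) hl
    (labelW_zero_of_le (Nat.le_add_left 1 l) hl)
  rw [nestedSeries, coeff_mk, ncSum_eq_sum_first _ (by grind [starPos_succ_add_one hl n])]
  symm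
  refine sum_of_injOn (fun m ↦ starPos p m (l + 1)) hmono.injective.injOn ?_ ?_ ?_
  · intro m hm
    rw [coe_range, Set.mem_Iio, Nat.lt_succ_iff] at hm
    rw [coe_Ico, Set.mem_Ico, ← starPos_succ_add_one hl n, Nat.lt_succ_iff]
    exact ⟨hstar m, hmono.monotone hm⟩
  · intro c hc hcm
    rw [mem_Ico, ← starPos_succ_add_one hl n, Nat.lt_succ_iff] at hc
    rw [hweight, if_neg, zero_mul, zero_mul]
    intro hlabel
    obtain ⟨m, rfl⟩ := eq_starPos_of_labelW_zero (by omega) (by omega) hlabel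
    exact hcm ⟨m, by simpa [Nat.lt_succ_iff] using hmono.le_iff_le.1 hc.2, rfl⟩
  · intro m _
    rw [hweight, Bool.not_false, if_pos (labelW_zero_starPos (Nat.le_add_left 1 l) hl m),
      starPos_succ_add_one hl, rightLegIndex]

theorem nestedSeries_eq_mul {l : ℕ} (hl : l < p) :
    nestedSeries p d l = C (d (l + 1)) * (nestedSeries p d (l + 1) * cyclicSeries p d l) := by
  ext n
  rw [coeff_nestedSeries_eq_sum d hl, coeff_C_mul, coeff_mul,
    Nat.sum_antidiagonal_eq_sum_range_succ_mk, mul_sum]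
  refine sum_congr rfl fun m hm ↦ ?_
  have hend : starPos p n l = starPos p (n - m) l + 2 * p * m := by
    obtain ⟨r, rfl⟩ := Nat.exists_eq_add_of_le (Nat.lt_succ_iff.1 (mem_range.1 hm))
    rw [starPos_eq_add_mul hl.le, starPos_eq_add_mul hl.le (_ - _), Nat.add_sub_cancel_left]
    ring
  rw [nestedSeries, cyclicSeries, coeff_mk, coeff_mk, hend, starPos_eq_add_mul hl.le m,
    ncSum_blockWeight_zero_add_mul d (by rw [starPos]; omega), mul_assoc]

theorem C_mul_cyclicSeries_succ {l : ℕ} (hl : l < p) :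
    C (d (l + 1)) * cyclicSeries p d (l + 1) + C (d l) =
      C (d l) * cyclicSeries p d l + C (d (l + 1)) := by
  ext n
  cases n with
  | zero => simp [constantCoeff_cyclicSeries, add_comm]
  | succ n =>
    have hlabel := labelW_zero_starPos (Nat.le_add_left 1 l) hl
    have hlt : starPos p 0 (l + 1) < starPos p (n + 1) (l + 1) :=
      starPos_strictMono (Nat.zero_lt_of_lt hl) hl n.succ_pos
    simp only [map_add, coeff_C_mul, coeff_C, n.succ_ne_zero, if_false, add_zero, cyclicSeries,
      coeff_mk, ← starPos_succ_add_one hl]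
    refine mul_ncSum_rotate hlt fun c _ _ ↦ ?_
    rw [blockWeight_of_labelW_left d (Nat.le_add_left 1 l) hl (hlabel 0),
      blockWeight_of_labelW_right d (Nat.le_add_left 1 l) hl (hlabel (n + 1)), mul_ite, mul_ite,
      mul_zero, mul_zero]
    exact if_congr Iff.rfl (mul_comm _ _) rfl

theorem C_mul_nestedSeries_zero_eq_prod :
    C (d 0) * nestedSeries p d 0 = ∏ l ∈ range (p + 1), C (d l) * cyclicSeries p d l := by
  have htelescope (m : ℕ) (hm : m ≤ p) : C (d 0) * nestedSeries p d 0 =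
      (∏ l ∈ range m, C (d l) * cyclicSeries p d l) * (C (d m) * nestedSeries p d m) := by
    induction m with
    | zero => simp
    | succ m ih =>
      rw [ih (Nat.le_of_succ_le hm), nestedSeries_eq_mul d hm, prod_range_succ]
      ring
  rw [htelescope p le_rfl, nestedSeries_self, prod_range_succ]

end CommSemiring

section CommRing

variable {R : Type*} [CommRing R] (d : ℕ → R)

theorem C_mul_cyclicSeries {l : ℕ} (hl : l ≤ p) :
    C (d l) * cyclicSeries p d l = C (d l) + X * (C (d 0) * nestedSeries p d 0) := by
  induction l with
  | zero => rw [cyclicSeries_zero]; ring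
  | succ l ih => linear_combination C_mul_cyclicSeries_succ d hl + ih (Nat.le_of_succ_le hl)

theorem X_mul_C_mul_nestedSeries_eq_X_mul_subst :
    X * (C (d 0) * nestedSeries p d 0) =
      X * (∏ l : Fin (p + 1), (C (d l) + X)).subst (X * (C (d 0) * nestedSeries p d 0)) := by
  have hsubst : HasSubst (X * (C (d 0) * nestedSeries p d 0)) := .of_constantCoeff_zero' (by simp)
  conv_lhs => rw [C_mul_nestedSeries_zero_eq_prod,
    prod_congr rfl fun l hl ↦ C_mul_cyclicSeries d (Nat.lt_succ_iff.1 (mem_range.1 hl)), prod_range]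
  rw [← coe_substAlgHom hsubst, map_prod]
  simp only [map_add, coe_substAlgHom, subst_X hsubst, subst_C]
  rfl

theorem mul_ncSum_blockWeight_zero [IsAddTorsionFree R] (p k : ℕ) :
    ((k + 1 : ℕ) : R) * (d 0 * ncSum (blockWeight p 0 d) 1 (2 * p * (k + 1) + 1)) =
      coeff k ((∏ l : Fin (p + 1), (C (d l) + X)) ^ (k + 1)) := by
  have h := lagrange_inversion (by simp) (X_mul_C_mul_nestedSeries_eq_X_mul_subst (p := p) d) 1 k
  simpa only [add_comm 1 k, pow_one, Nat.cast_one, one_mul, coeff_succ_X_mul, coeff_C_mul,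
    nestedSeries, coeff_mk, starPos, zero_add, Nat.sub_zero] using h

end CommRing

end GeneratingSeries

/-- The coefficients of `P_k` are generalized Fuss–Narayana numbers: for `p, k ≥ 1`
and nonnegative `j₀ + j₁ + ⋯ + j_p = pk`,
`k · N₀(k, (j₀, …, j_p)) = C(k, j₀+1) · C(k, j₁) ⋯ C(k, j_p)`. -/
theorem Ncount_zero_eq_fussNarayana (p k : ℕ) (hp : 1 ≤ p) (hk : 1 ≤ k)
    (j : Fin (p + 1) → ℕ) (hj : ∑ l, j l = p * k) :
    k * Ncount p 0 k j =
      Nat.choose k (j 0 + 1) * ∏ l : Fin p, Nat.choose k (j l.succ) := by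
  obtain ⟨k, rfl⟩ := Nat.exists_eq_add_of_le' hk
  let j' : Fin (p + 1) → ℕ := Pi.single 0 1 + j
  have hj' : Finsupp.equivFunOnFinite.symm j' =
      Finsupp.single 0 1 + Finsupp.equivFunOnFinite.symm j := by
    ext; simp [j', Finsupp.single_eq_pi_single]
  have hsum : ∑ l, j' l + k = Fintype.card (Fin (p + 1)) * (k + 1) := by
    simp only [j', Pi.add_apply, sum_add_distrib, sum_pi_single', mem_univ, if_true, hj,
      Fintype.card_fin]
    ring
  have hprod : ∏ l, (k + 1).choose (j' l) =
      (k + 1).choose (j 0 + 1) * ∏ l : Fin p, (k + 1).choose (j l.succ) := by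
    simp [j', Fin.prod_univ_succ, add_comm]
  have hlagrange := congrArg (MvPolynomial.coeff (Finsupp.equivFunOnFinite.symm j'))
    (mul_ncSum_blockWeight_zero
      (fun l ↦ (MvPolynomial.X (Fin.ofNat (p + 1) l) : MvPolynomial (Fin (p + 1)) ℤ)) p k)
  simp only [Fin.ofNat_val_eq_self, coeff_coeff_prod_C_X_add_X_pow hsum] at hlagrange
  rw [hj', ← map_natCast MvPolynomial.C, MvPolynomial.coeff_C_mul, Fin.ofNat_zero,
    MvPolynomial.coeff_X_mul, coeff_ncSum_blockWeight] at hlagrange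
  rw [← hprod]
  exact_mod_cast hlagrange
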